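/- For every natural number m, the predicate on pairs (V, V′) of m×m integer matrices asserting 'V and V′ are symmetric, unimodular, indefinite (i.e., for each of them there exist real vectors on which the associated quadratic form is positive and vectors on which it is negative), and congruent over ℤ' is decidable in the computability-theoretic sense: it is a ComputablePred with respect to the canonical encoding of integer matrices. That is, there exists an algorithm that takes as input two integral, symmetric, unimodular, indefinite matrices and outputs whether or not they are congruent over ℤ. -/

import Mathlib

open Matrix

/-!
Hermite reduction shows that symmetric integer matrices of bounded nonzero determinant fall into
finitely many congruence classes. Choose the upper left entry `a` nonzero and small, reduce the
rest of the first row modulo `a`, and recurse on the Schur complement, whose determinant is again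
bounded.

A finite set of representatives is enough for an algorithm: search through the changes of basis
until both matrices become representatives, then read the answer off a finite table. The table
exists because its finitely many entries are fixed truth values, which need not be found
effectively. The classification of indefinite forms is not involved.
-/

section Congruence

variable {ι R S : Type*} [Fintype ι] [CommRing R] [CommRing S]

/-- Indefiniteness of a square matrix: its quadratic form takes positive and negative values. The
matrix is not required to be symmetric. -/
def IsIndefinite [Preorder R] (V : Matrix ι ι R) : Prop :=
  (∃ x : ι → R, 0 < x ⬝ᵥ V *ᵥ x) ∧ ∃ y : ι → R, y ⬝ᵥ V *ᵥ y < 0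

theorem dotProduct_transpose_mul_mul_mulVec (P V : Matrix ι ι R) (x y : ι → R) :
    x ⬝ᵥ (Pᵀ * V * P) *ᵥ y = (P *ᵥ x) ⬝ᵥ V *ᵥ (P *ᵥ y) := by
  rw [← mulVec_mulVec, ← mulVec_mulVec, dotProduct_mulVec x, vecMul_transpose]

variable [DecidableEq ι]

/-- Congruence of square matrices over a commutative ring, that is, equivalence of the associated
bilinear forms under an invertible change of basis. -/
def IsCongruent (V W : Matrix ι ι R) : Prop :=
  ∃ P : Matrix ι ι R, IsUnit P.det ∧ W = Pᵀ * V * P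

namespace IsCongruent

variable {U V W : Matrix ι ι R}

theorem refl (V : Matrix ι ι R) : IsCongruent V V := ⟨1, by simp, by simp⟩

theorem symm (h : IsCongruent V W) : IsCongruent W V := by
  obtain ⟨P, hP, rfl⟩ := h
  refine ⟨P⁻¹, isUnit_nonsing_inv_det P hP, ?_⟩
  have hPP : P * P⁻¹ = 1 := mul_nonsing_inv P hP
  calc V = (P * P⁻¹)ᵀ * V * (P * P⁻¹) := by simp [hPP]
    _ = P⁻¹ᵀ * (Pᵀ * V * P) * P⁻¹ := by simp only [transpose_mul, Matrix.mul_assoc]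

theorem trans (hUV : IsCongruent U V) (hVW : IsCongruent V W) : IsCongruent U W := by
  obtain ⟨P, hP, rfl⟩ := hUV
  obtain ⟨Q, hQ, rfl⟩ := hVW
  exact ⟨P * Q, by simpa [det_mul] using ⟨hP, hQ⟩, by simp only [transpose_mul, Matrix.mul_assoc]⟩

theorem isSymm (h : IsCongruent V W) (hV : V.IsSymm) : W.IsSymm := by
  obtain ⟨P, -, rfl⟩ := h
  simp [IsSymm, transpose_mul, hV.eq, Matrix.mul_assoc]

theorem det_eq {V W : Matrix ι ι ℤ} (h : IsCongruent V W) : W.det = V.det := by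
  obtain ⟨P, hP, rfl⟩ := h
  rw [det_mul, det_mul, det_transpose, mul_right_comm, Int.isUnit_mul_self hP, one_mul]

theorem map (f : R →+* S) (h : IsCongruent V W) : IsCongruent (V.map f) (W.map f) := by
  obtain ⟨P, hP, rfl⟩ := h
  refine ⟨P.map f, ?_, by simp only [Matrix.map_mul, transpose_map]⟩
  simpa only [RingHom.map_det] using! hP.map f

theorem exists_form_eq (h : IsCongruent V W) (x : ι → R) :
    ∃ y, y ⬝ᵥ V *ᵥ y = x ⬝ᵥ W *ᵥ x := by
  obtain ⟨P, -, rfl⟩ := h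
  exact ⟨P *ᵥ x, (dotProduct_transpose_mul_mul_mulVec P V x x).symm⟩

theorem isIndefinite [Preorder R] (h : IsCongruent V W) (hV : IsIndefinite V) :
    IsIndefinite W := by
  obtain ⟨⟨x, hx⟩, y, hy⟩ := hV
  obtain ⟨x', hx'⟩ := h.symm.exists_form_eq x
  obtain ⟨y', hy'⟩ := h.symm.exists_form_eq y
  exact ⟨⟨x', hx' ▸ hx⟩, y', hy' ▸ hy⟩

theorem submatrix_perm (V : Matrix ι ι R) (σ : Equiv.Perm ι) :
    IsCongruent V (V.submatrix σ σ) := by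
  refine ⟨(1 : Matrix ι ι R).submatrix id σ, ?_, ?_⟩
  · rw [det_permute', det_one, mul_one]
    exact (Units.isUnit _).map (Int.castRingHom R)
  · ext i j
    simp [Matrix.mul_apply, Matrix.one_apply]

end IsCongruent

theorem exists_isUnit_det_eq_smul_col [IsDomain R] [IsPrincipalIdealRing R] (i : ι) (v : ι → R) :
    ∃ P : Matrix ι ι R, IsUnit P.det ∧ ∃ k : R, v = k • P.col i := by
  rcases eq_or_ne v 0 with rfl | hv
  · exact ⟨1, by simp, 0, by simp⟩
  obtain ⟨r, snf⟩ := Submodule.smithNormalForm (Pi.basisFun R ι) (R ∙ v)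
  have hr : r = 1 := by
    simpa [← (LinearEquiv.toSpanNonzeroSingleton R _ v hv).finrank_eq] using
      (Module.finrank_eq_card_basis snf.bN).symm
  subst hr
  let w : (R ∙ v) := ⟨v, Submodule.mem_span_singleton_self v⟩
  let b := snf.bM.reindex (Equiv.swap i (snf.f 0))
  refine ⟨(Pi.basisFun R ι).toMatrix b, ?_, snf.bN.repr w 0 * snf.a 0, ?_⟩
  · rw [← Module.Basis.det_apply]
    exact Module.Basis.isUnit_det _ _
  · have hcol : ((Pi.basisFun R ι).toMatrix b).col i = snf.bM (snf.f 0) := by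
      ext j
      simp [Module.Basis.toMatrix_apply, b]
    have hw := congrArg Subtype.val (snf.bN.sum_repr w)
    rw [hcol, mul_smul, ← snf.snf]
    simpa using hw.symm

theorem exists_isCongruent_diag_dvd [IsDomain R] [IsPrincipalIdealRing R] (V : Matrix ι ι R)
    (i : ι) (x : ι → R) : ∃ W, IsCongruent V W ∧ W i i ∣ x ⬝ᵥ V *ᵥ x := by
  obtain ⟨P, hP, k, rfl⟩ := exists_isUnit_det_eq_smul_col i x
  refine ⟨_, ⟨P, hP, rfl⟩, k * k, ?_⟩
  have hdiag : (Pᵀ * V * P) i i = P.col i ⬝ᵥ V *ᵥ P.col i := by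
    simpa using dotProduct_transpose_mul_mul_mulVec P V (Pi.single i 1) (Pi.single i 1)
  rw [hdiag, mulVec_smul, smul_dotProduct, dotProduct_smul, smul_eq_mul, smul_eq_mul]
  ring

-- `V` sends the `i`-th adjugate column to `V.det • eᵢ`, so translating that column by the isotropic
-- vector `t • eᵢ` changes the value of the form by `2 * t * V.det`.
theorem exists_form_eq_det_mul {V : Matrix ι ι R} (hV : V.IsSymm) {i : ι} (hi : V i i = 0)
    (t : R) : ∃ x, x ⬝ᵥ V *ᵥ x = V.det * (V.adjugate i i + 2 * t) := by
  set w := V.adjugate.col i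
  set e : ι → R := Pi.single i 1
  have hw : V *ᵥ w = V.det • e := by
    ext j
    simpa [Matrix.mul_apply, mulVec, dotProduct, w, e, Matrix.one_apply, Pi.single_apply] using!
      congrFun₂ (mul_adjugate V) j i
  have hew : e ⬝ᵥ V *ᵥ w = V.det := by simp [hw, e]
  have hwe : w ⬝ᵥ V *ᵥ e = V.det := by
    rw [dotProduct_mulVec, ← mulVec_transpose, hV.eq, dotProduct_comm, hew]
  have hww : w ⬝ᵥ V *ᵥ w = V.det * V.adjugate i i := by simp [hw, w, e]
  have hee : e ⬝ᵥ V *ᵥ e = 0 := by simp [e, hi]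
  refine ⟨w + t • e, ?_⟩
  simp only [mulVec_add, mulVec_smul, add_dotProduct, dotProduct_add, smul_dotProduct,
    dotProduct_smul, hww, hwe, hew, hee, smul_eq_mul]
  ring

theorem exists_form_ne_zero_of_diag_eq_zero {V : Matrix ι ι ℤ} (hV : V.IsSymm) (hdet : V.det ≠ 0)
    {i : ι} (hi : V i i = 0) : ∃ x, x ⬝ᵥ V *ᵥ x ≠ 0 ∧ |x ⬝ᵥ V *ᵥ x| ≤ 2 * |V.det| := by
  obtain ⟨t, ht | ht⟩ := Int.even_or_odd' (V.adjugate i i)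
  · obtain ⟨x, hx⟩ := exists_form_eq_det_mul hV hi (1 - t)
    have hx2 : x ⬝ᵥ V *ᵥ x = 2 * V.det := by rw [hx, ht]; ring
    exact ⟨x, by simpa [hx2] using hdet, by simp [hx2, abs_mul]⟩
  · obtain ⟨x, hx⟩ := exists_form_eq_det_mul hV hi (-t)
    have hx1 : x ⬝ᵥ V *ᵥ x = V.det := by rw [hx, ht]; ring
    exact ⟨x, by simpa [hx1] using hdet, by rw [hx1]; linarith [abs_nonneg V.det]⟩

end Congruence

section SchurComplement

variable {R : Type*} [CommRing R] {n : ℕ}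

/-- The Schur complement of the upper left entry, multiplied by that entry to avoid division;
it is the form on which the induction on the dimension runs. -/
def scaledSchur (V : Matrix (Fin (n + 1)) (Fin (n + 1)) R) : Matrix (Fin n) (Fin n) R :=
  of fun i j => V 0 0 * V i.succ j.succ - V i.succ 0 * V 0 j.succ

/-- The block matrix `[1, t; 0, Q]`, the change of basis that lifts `Q` along `scaledSchur` and
translates by the first basis vector. -/
def bordered (t : Fin n → R) (Q : Matrix (Fin n) (Fin n) R) :
    Matrix (Fin (n + 1)) (Fin (n + 1)) R :=
  of (vecCons (vecCons 1 t) fun i => vecCons 0 (Q i))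

theorem det_bordered (t : Fin n → R) (Q : Matrix (Fin n) (Fin n) R) :
    (bordered t Q).det = Q.det := by
  have hsub : (bordered t Q).submatrix Fin.succ Fin.succ = Q := by
    ext i j
    simp [bordered]
  have hcol (i : Fin n) : (bordered t Q) i.succ 0 = 0 := by simp [bordered]
  have hcorner : (bordered t Q) 0 0 = 1 := by simp [bordered]
  simp [det_succ_column_zero, Fin.sum_univ_succ, hcol, hcorner, hsub]

theorem mul_bordered_apply_zero {ι : Type*} (A : Matrix ι (Fin (n + 1)) R) (t : Fin n → R)
    (Q : Matrix (Fin n) (Fin n) R) (i : ι) : (A * bordered t Q) i 0 = A i 0 := by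
  simp [bordered, mul_apply, Fin.sum_univ_succ]

theorem mul_bordered_apply_succ {ι : Type*} (A : Matrix ι (Fin (n + 1)) R) (t : Fin n → R)
    (Q : Matrix (Fin n) (Fin n) R) (i : ι) (j : Fin n) :
    (A * bordered t Q) i j.succ = A i 0 * t j + ∑ k, A i k.succ * Q k j := by
  simp [bordered, mul_apply, Fin.sum_univ_succ]

theorem transpose_bordered_mul_zero {ι : Type*} (t : Fin n → R) (Q : Matrix (Fin n) (Fin n) R)
    (A : Matrix (Fin (n + 1)) ι R) : ((bordered t Q)ᵀ * A) 0 = A 0 := by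
  ext j
  simp [bordered, mul_apply, Fin.sum_univ_succ]

theorem scaledSchur_transpose (V : Matrix (Fin (n + 1)) (Fin (n + 1)) R) :
    scaledSchur Vᵀ = (scaledSchur V)ᵀ := by
  ext i j
  simp [scaledSchur, mul_comm]

theorem scaledSchur_mul_bordered (V : Matrix (Fin (n + 1)) (Fin (n + 1)) R) (t : Fin n → R)
    (Q : Matrix (Fin n) (Fin n) R) : scaledSchur (V * bordered t Q) = scaledSchur V * Q := by
  ext i j
  simp only [scaledSchur, of_apply, mul_apply (M := of _), mul_bordered_apply_zero,
    mul_bordered_apply_succ, sub_mul, Finset.sum_sub_distrib, mul_assoc, ← Finset.mul_sum]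
  ring

theorem scaledSchur_bordered_congr (V : Matrix (Fin (n + 1)) (Fin (n + 1)) R) (t : Fin n → R)
    (Q : Matrix (Fin n) (Fin n) R) :
    scaledSchur ((bordered t Q)ᵀ * V * bordered t Q) = Qᵀ * scaledSchur V * Q := by
  rw [scaledSchur_mul_bordered, ← transpose_transpose (_ * V), scaledSchur_transpose,
    transpose_mul, transpose_transpose, scaledSchur_mul_bordered, scaledSchur_transpose,
    transpose_mul, transpose_transpose]

theorem corner_mul_det_scaledSchur (V : Matrix (Fin (n + 1)) (Fin (n + 1)) R) :
    V 0 0 * (scaledSchur V).det = V 0 0 ^ n * V.det := by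
  set B := bordered (fun j => -V 0 j.succ) (V 0 0 • (1 : Matrix (Fin n) (Fin n) R))
  have hsub : (V * B).submatrix Fin.succ Fin.succ = scaledSchur V := by
    ext i j
    simp only [B, submatrix_apply, mul_bordered_apply_succ, mul_neg, Matrix.smul_apply, one_apply,
      smul_eq_mul, mul_ite, mul_one, mul_zero, Finset.sum_ite_eq', Finset.mem_univ, ↓reduceIte,
      scaledSchur, of_apply]
    ring
  have hrow (j : Fin n) : (V * B) 0 j.succ = 0 := by
    simp only [B, mul_bordered_apply_succ, mul_neg, Matrix.smul_apply, one_apply, smul_eq_mul,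
      mul_ite, mul_one, mul_zero, Finset.sum_ite_eq', Finset.mem_univ, ↓reduceIte]
    ring
  have hcorner : (V * B) 0 0 = V 0 0 := mul_bordered_apply_zero _ _ _ _
  calc V 0 0 * (scaledSchur V).det = (V * B).det := by
        simp [det_succ_row_zero (V * B), Fin.sum_univ_succ, hrow, hcorner, hsub]
    _ = V 0 0 ^ n * V.det := by simp [B, det_bordered, mul_comm]

variable {V W : Matrix (Fin (n + 1)) (Fin (n + 1)) R}

theorem isSymm_scaledSchur (hV : V.IsSymm) : (scaledSchur V).IsSymm := by
  rw [IsSymm, ← scaledSchur_transpose, hV.eq]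

theorem eq_of_row_eq_of_scaledSchur_eq [IsDomain R] (hV : V.IsSymm) (hW : W.IsSymm)
    (h0 : V 0 0 ≠ 0) (hrow : V 0 = W 0) (hschur : scaledSchur V = scaledSchur W) : V = W := by
  have hcol (i : Fin (n + 1)) : V i 0 = W i 0 := by rw [← hV.apply, ← hW.apply, hrow]
  ext i j
  refine Fin.cases (congrFun hrow j) (fun i => ?_) i
  refine Fin.cases (hcol _) (fun j => ?_) j
  have hij := congrFun₂ hschur i j
  simp only [scaledSchur, of_apply, ← hrow, ← hcol, sub_left_inj] at hij
  exact mul_left_cancel₀ h0 hij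

end SchurComplement

section Reduction

variable {n : ℕ}

theorem exists_two_mul_abs_add_mul_le (c : ℤ) {a : ℤ} (ha : a ≠ 0) :
    ∃ t, 2 * |c + a * t| ≤ |a| := by
  obtain ⟨t, ht⟩ : a ∣ c.bmod a.natAbs - c := Int.natAbs_dvd.1 Int.dvd_bmod_sub_self
  have hpos : 0 < a.natAbs := Int.natAbs_pos.2 ha
  have hle := Int.le_bmod (x := c) hpos
  have hlt := Int.bmod_lt (x := c) hpos
  refine ⟨t, ?_⟩
  rw [← ht, add_sub_cancel, Int.abs_eq_natAbs, Int.abs_eq_natAbs]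
  omega

theorem IsCongruent.exists_reduced_lift {V : Matrix (Fin (n + 1)) (Fin (n + 1)) ℤ}
    {T : Matrix (Fin n) (Fin n) ℤ} (h : IsCongruent (scaledSchur V) T) (h0 : V 0 0 ≠ 0) :
    ∃ W, IsCongruent V W ∧ W 0 0 = V 0 0 ∧ scaledSchur W = T ∧
      ∀ j : Fin n, 2 * |W 0 j.succ| ≤ |V 0 0| := by
  obtain ⟨Q, hQ, rfl⟩ := h
  choose t ht using fun j => exists_two_mul_abs_add_mul_le (∑ k, V 0 k.succ * Q k j) h0
  refine ⟨_, ⟨bordered t Q, by rwa [det_bordered], rfl⟩, ?_, scaledSchur_bordered_congr V t Q,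
    fun j => ?_⟩
  · rw [Matrix.mul_assoc, transpose_bordered_mul_zero, mul_bordered_apply_zero]
  · rw [Matrix.mul_assoc, transpose_bordered_mul_zero, mul_bordered_apply_succ, add_comm]
    exact ht j

-- If the lift of `T` has first row `(a, b, …)` with `2 * |b| ≤ |a|` and second diagonal entry `d`,
-- then `T 0 0 = a * d - b ^ 2`, and minimality of `a` under swapping gives `|a| ≤ |d|`.
theorem three_mul_corner_sq_le {V : Matrix (Fin (n + 2)) (Fin (n + 2)) ℤ} (hV : V.IsSymm)
    (h0 : V 0 0 ≠ 0) (hmin : ∀ W, IsCongruent V W → |V 0 0| ≤ |W 0 0|)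
    {T : Matrix (Fin (n + 1)) (Fin (n + 1)) ℤ} (hT : IsCongruent (scaledSchur V) T) :
    3 * |V 0 0| ^ 2 ≤ 4 * |T 0 0| := by
  obtain ⟨W, hVW, hcorner, rfl, hrow⟩ := hT.exists_reduced_lift h0
  have hdiag : |V 0 0| ≤ |W 1 1| := by
    simpa using hmin _ (hVW.trans (IsCongruent.submatrix_perm W (Equiv.swap 0 1)))
  have hentry : V 0 0 * W 1 1 = W 0 1 ^ 2 + scaledSchur W 0 0 := by
    have hsymm : W 1 0 = W 0 1 := (hVW.isSymm hV).apply 0 1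
    simp [scaledSchur, hcorner, hsymm, sq]
  have htriangle : |V 0 0| * |W 1 1| ≤ |W 0 1| ^ 2 + |scaledSchur W 0 0| := by
    rw [← abs_mul, ← abs_pow, hentry]
    exact abs_add_le _ _
  have hsmall : 2 * |W 0 1| ≤ |V 0 0| := hrow 0
  nlinarith [abs_nonneg (V 0 0), abs_nonneg (W 0 1)]

theorem exists_isCongruent_corner_minimal (V : Matrix (Fin (n + 1)) (Fin (n + 1)) ℤ) :
    ∃ W, IsCongruent V W ∧ ∀ U, IsCongruent W U → |W 0 0| ≤ |U 0 0| := by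
  obtain ⟨W, hVW, hmin⟩ := exists_minimalFor_of_wellFoundedLT (IsCongruent V)
    (fun W => (W 0 0).natAbs) ⟨V, .refl V⟩
  refine ⟨W, hVW, fun U hWU => ?_⟩
  have hU := (le_total _ _).elim id (hmin (hVW.trans hWU))
  simpa only [Int.abs_eq_natAbs, Nat.cast_le] using hU

theorem abs_corner_mul_abs_det_scaledSchur (V : Matrix (Fin (n + 1)) (Fin (n + 1)) ℤ) :
    |V 0 0| * |(scaledSchur V).det| = |V 0 0| ^ n * |V.det| := by
  rw [← abs_pow, ← abs_mul, ← abs_mul, corner_mul_det_scaledSchur]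

theorem corner_pow_le_of_corner_sq_le {V : Matrix (Fin (n + 2)) (Fin (n + 2)) ℤ}
    (h0 : V 0 0 ≠ 0) {b : ℤ} (hsq : |V 0 0| ^ 2 ≤ 2 * |b|)
    (hb : |b| ^ (n + 1) ≤ 2 ^ (n + 1).choose 2 * |(scaledSchur V).det|) :
    |V 0 0| ^ (n + 2) ≤ 2 ^ (n + 2).choose 2 * |V.det| := by
  refine le_of_mul_le_mul_left ?_ (pow_pos (abs_pos.2 h0) (n + 1))
  calc |V 0 0| ^ (n + 1) * |V 0 0| ^ (n + 2)
      = |V 0 0| * (|V 0 0| ^ 2) ^ (n + 1) := by ring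
    _ ≤ |V 0 0| * (2 * |b|) ^ (n + 1) := by gcongr
    _ = |V 0 0| * (2 ^ (n + 1) * |b| ^ (n + 1)) := by rw [mul_pow]
    _ ≤ |V 0 0| * (2 ^ (n + 1) * (2 ^ (n + 1).choose 2 * |(scaledSchur V).det|)) := by gcongr
    _ = 2 ^ (n + 2).choose 2 * (|V 0 0| * |(scaledSchur V).det|) := by
      rw [Nat.choose_succ_succ' (n + 1) 1, Nat.choose_one_right, pow_add]
      ring
    _ = |V 0 0| ^ (n + 1) * (2 ^ (n + 2).choose 2 * |V.det|) := by
      rw [abs_corner_mul_abs_det_scaledSchur]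
      ring

theorem exists_isCongruent_corner_pow_le {V : Matrix (Fin (n + 1)) (Fin (n + 1)) ℤ}
    (hV : V.IsSymm) :
    ∃ W, IsCongruent V W ∧ |W 0 0| ^ (n + 1) ≤ 2 ^ (n + 1).choose 2 * |V.det| := by
  induction n with
  | zero => exact ⟨V, .refl V, by simp⟩
  | succ n ih =>
    obtain ⟨W, hVW, hmin⟩ := exists_isCongruent_corner_minimal V
    refine ⟨W, hVW, ?_⟩
    rcases eq_or_ne (W 0 0) 0 with h0 | h0
    · simp [h0]
    have hW := hVW.isSymm hV
    obtain ⟨T, hT, hbound⟩ := ih (isSymm_scaledSchur hW)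
    have hsq : |W 0 0| ^ 2 ≤ 2 * |T 0 0| := by
      linarith [three_mul_corner_sq_le hW h0 hmin hT, sq_nonneg |W 0 0|]
    rw [← hVW.det_eq]
    exact corner_pow_le_of_corner_sq_le h0 hsq hbound

theorem exists_isCongruent_corner_ne_zero {V : Matrix (Fin (n + 1)) (Fin (n + 1)) ℤ}
    (hV : V.IsSymm) (hdet : V.det ≠ 0) :
    ∃ W, IsCongruent V W ∧ W 0 0 ≠ 0 ∧ |W 0 0| ≤ 2 ^ ((n + 1).choose 2 + 1) * |V.det| := by
  obtain ⟨W, hVW, hW⟩ := exists_isCongruent_corner_pow_le hV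
  rcases eq_or_ne (W 0 0) 0 with h0 | h0
  · obtain ⟨x, hx0, hx⟩ := exists_form_ne_zero_of_diag_eq_zero (hVW.isSymm hV)
      (hVW.det_eq ▸ hdet) h0
    obtain ⟨U, hWU, hU⟩ := exists_isCongruent_diag_dvd W 0 x
    refine ⟨U, hVW.trans hWU, ne_zero_of_dvd_ne_zero hx0 hU, ?_⟩
    calc |U 0 0| ≤ |x ⬝ᵥ W *ᵥ x| := Int.le_of_dvd (abs_pos.2 hx0) ((abs_dvd_abs _ _).2 hU)
      _ ≤ 2 ^ 1 * |V.det| := by simpa [hVW.det_eq] using hx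
      _ ≤ 2 ^ ((n + 1).choose 2 + 1) * |V.det| := by gcongr <;> lia
  · refine ⟨W, hVW, h0, ?_⟩
    calc |W 0 0| ≤ |W 0 0| ^ (n + 1) := le_self_pow₀ (Int.one_le_abs h0) n.succ_ne_zero
      _ ≤ 2 ^ (n + 1).choose 2 * |V.det| := hW
      _ ≤ 2 ^ ((n + 1).choose 2 + 1) * |V.det| := by gcongr <;> lia

theorem abs_det_scaledSchur_le {V : Matrix (Fin (n + 1)) (Fin (n + 1)) ℤ} {C D : ℤ}
    (h0 : V 0 0 ≠ 0) (hC : |V 0 0| ≤ C) (hD : |V.det| ≤ D) :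
    |(scaledSchur V).det| ≤ C ^ n * D :=
  calc |(scaledSchur V).det| ≤ |V 0 0| * |(scaledSchur V).det| :=
        le_mul_of_one_le_left (abs_nonneg _) (Int.one_le_abs h0)
    _ = |V 0 0| ^ n * |V.det| := abs_corner_mul_abs_det_scaledSchur V
    _ ≤ C ^ n * D := by
        have := (abs_nonneg _).trans hC
        gcongr

theorem finite_setOf_scaledSchur_mem {S : Set (Matrix (Fin n) (Fin n) ℤ)} (hS : S.Finite) (C : ℤ) :
    {V : Matrix (Fin (n + 1)) (Fin (n + 1)) ℤ |
      V.IsSymm ∧ V 0 0 ≠ 0 ∧ (∀ j, |V 0 j| ≤ C) ∧ scaledSchur V ∈ S}.Finite := by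
  have hbox : (Set.univ.pi fun _ : Fin (n + 1) => Set.Icc (-C) C).Finite :=
    Set.Finite.pi fun _ => Set.finite_Icc _ _
  refine Set.Finite.of_injOn (f := fun V => (V 0, scaledSchur V)) ?_ ?_ (hbox.prod hS)
  · exact fun V ⟨_, _, hrow, hschur⟩ => ⟨fun j _ => abs_le.1 (hrow j), hschur⟩
  · intro V ⟨hV, h0, _⟩ W ⟨hW, _⟩ heq
    obtain ⟨hrow, hschur⟩ := Prod.mk.inj heq
    exact eq_of_row_eq_of_scaledSchur_eq hV hW h0 hrow hschur

theorem exists_finite_isCongruent_representatives (m : ℕ) (D : ℤ) :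
    ∃ S : Set (Matrix (Fin m) (Fin m) ℤ), S.Finite ∧
      ∀ V, V.IsSymm → V.det ≠ 0 → |V.det| ≤ D → ∃ W ∈ S, IsCongruent V W := by
  induction m generalizing D with
  | zero => exact ⟨Set.univ, Set.toFinite _, fun V _ _ _ => ⟨V, trivial, .refl V⟩⟩
  | succ n ih =>
    set C := 2 ^ ((n + 1).choose 2 + 1) * D with hC
    obtain ⟨S, hS, hrep⟩ := ih (C ^ n * D)
    refine ⟨_, finite_setOf_scaledSchur_mem hS C, fun V hV hdet hD => ?_⟩
    obtain ⟨W, hVW, h0, hbound⟩ := exists_isCongruent_corner_ne_zero hV hdet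
    have hWC : |W 0 0| ≤ C := hbound.trans (by rw [hC]; gcongr)
    have hschur_ne : (scaledSchur W).det ≠ 0 := by
      refine right_ne_zero_of_mul (a := W 0 0) ?_
      rw [corner_mul_det_scaledSchur, hVW.det_eq]
      exact mul_ne_zero (pow_ne_zero n h0) hdet
    obtain ⟨T, hTS, hT⟩ := hrep (scaledSchur W) (isSymm_scaledSchur (hVW.isSymm hV)) hschur_ne
      (abs_det_scaledSchur_le h0 hWC (hVW.det_eq ▸ hD))
    obtain ⟨U, hWU, hcorner, rfl, hrow⟩ := hT.exists_reduced_lift h0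
    refine ⟨U, ⟨(hVW.trans hWU).isSymm hV, hcorner ▸ h0, Fin.cases (hcorner ▸ hWC) fun j => ?_,
      hTS⟩, hVW.trans hWU⟩
    linarith [hrow j, abs_nonneg (U 0 j.succ)]

end Reduction

section PrimitiveRecursion

theorem primrec_intEquivNatSumNat : Primrec Equiv.intEquivNatSumNat :=
  Primrec.encode_iff.1 <| Primrec.encode.of_eq fun z => by cases z <;> rfl

theorem primrec_intEquivNatSumNat_symm : Primrec Equiv.intEquivNatSumNat.symm :=
  Primrec.encode_iff.1 <| Primrec.encode.of_eq fun x => by cases x <;> rfl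

theorem primrec_int_toNat : Primrec Int.toNat :=
  (Primrec.sumCasesOn primrec_intEquivNatSumNat Primrec₂.right (Primrec₂.const 0)).of_eq
    fun z => by cases z <;> rfl

theorem primrec_int_toNat_neg : Primrec fun z : ℤ => (-z).toNat :=
  (Primrec.sumCasesOn primrec_intEquivNatSumNat (Primrec₂.const 0)
    (Primrec.succ.comp₂ Primrec₂.right)).of_eq fun z => by cases z <;> simp <;> rfl

theorem primrec_int_subNatNat : Primrec₂ Int.subNatNat :=
  (Primrec.nat_casesOn (Primrec.nat_sub.comp Primrec.snd Primrec.fst)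
    (primrec_intEquivNatSumNat_symm.comp (Primrec.sumInl.comp Primrec.nat_sub))
    (primrec_intEquivNatSumNat_symm.comp₂ (Primrec.sumInr.comp₂ Primrec₂.right))).of_eq
    fun p => by
      unfold Int.subNatNat
      cases p.2 - p.1 <;> rfl

theorem primrec_int_add : Primrec₂ ((· + ·) : ℤ → ℤ → ℤ) := by
  refine (primrec_int_subNatNat.comp₂
    (Primrec.nat_add.comp₂ (primrec_int_toNat.comp₂ .left) (primrec_int_toNat.comp₂ .right))
    (Primrec.nat_add.comp₂ (primrec_int_toNat_neg.comp₂ .left)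
      (primrec_int_toNat_neg.comp₂ .right))).of_eq fun a b => ?_
  rw [Int.subNatNat_eq_coe]
  lia

theorem primrec_int_mul : Primrec₂ ((· * ·) : ℤ → ℤ → ℤ) := by
  refine (primrec_int_subNatNat.comp₂
    (Primrec.nat_add.comp₂
      (Primrec.nat_mul.comp₂ (primrec_int_toNat.comp₂ .left) (primrec_int_toNat.comp₂ .right))
      (Primrec.nat_mul.comp₂ (primrec_int_toNat_neg.comp₂ .left)
        (primrec_int_toNat_neg.comp₂ .right)))
    (Primrec.nat_add.comp₂
      (Primrec.nat_mul.comp₂ (primrec_int_toNat.comp₂ .left) (primrec_int_toNat_neg.comp₂ .right))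
      (Primrec.nat_mul.comp₂ (primrec_int_toNat_neg.comp₂ .left)
        (primrec_int_toNat.comp₂ .right)))).of_eq fun a b => ?_
  conv_rhs => rw [← Int.toNat_sub_toNat_neg a, ← Int.toNat_sub_toNat_neg b]
  rw [Int.subNatNat_eq_coe]
  push_cast
  ring

variable {α β σ : Type*} [Primcodable α] [Primcodable β] [Primcodable σ]

@[to_additive]
theorem primrec_finset_prod {ι : Type*} [CommMonoid σ] (hmul : Primrec₂ ((· * ·) : σ → σ → σ))
    (s : Finset ι) {f : ι → α → σ} (hf : ∀ i, Primrec (f i)) :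
    Primrec fun a => ∏ i ∈ s, f i a := by
  classical
  induction s using Finset.induction_on with
  | empty => simpa only [Finset.prod_empty] using Primrec.const 1
  | insert i s hi ih => simpa only [Finset.prod_insert hi] using hmul.comp (hf i) ih

theorem primrec_fin_pi {n : ℕ} {f : α → Fin n → σ} (hf : ∀ i, Primrec fun a => f a i) :
    Primrec f :=
  Primrec.fin_curry.2 <| (Primrec.fin_curry₁.2 hf).swap

theorem primrecPred_mem_of_finite {s : Set α} (hs : s.Finite) : PrimrecPred (· ∈ s) :=
  (Primrec.eq.exists_mem_list.comp (Primrec.const hs.toFinset.toList) Primrec.id).of_eq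
    fun a => by simp

theorem rePred_exists {R : α → β → Prop} (hR : PrimrecRel R) : REPred fun a => ∃ b, R a b := by
  classical
  have hguard : Primrec₂ fun (a : α) (n : ℕ) =>
      (Encodable.decode (α := β) n).bind (Option.guard fun b => R a b) :=
    Primrec.option_bind (Primrec.decode.comp Primrec.snd) <| Primrec.option_guard
      (hR.comp₂ ((Primrec.fst.comp Primrec.fst).comp₂ .left) .right) Primrec.snd
  refine (Partrec.rfindOpt hguard.to_comp).dom_re.of_eq fun a => Nat.rfindOpt_dom.trans ?_
  constructor
  · rintro ⟨n, b, hb⟩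
    obtain ⟨b', -, hb'⟩ := Option.bind_eq_some_iff.1 hb
    exact ⟨b', of_decide_eq_true (Option.guard_eq_some_iff.1 hb').2⟩
  · rintro ⟨b, hb⟩
    exact ⟨Encodable.encode b, b, by simpa using hb⟩

theorem computablePred_and_of_finite_representatives {p q : α → Prop} {c : β → Prop}
    {f : α → β → α} {S : Set α} [Nonempty β] (hp : PrimrecPred p) (hc : PrimrecPred c)
    (hf : Primrec₂ f) (hS : S.Finite) (hrep : ∀ a, p a → ∃ b, c b ∧ f a b ∈ S)
    (hq : ∀ a b, c b → (q (f a b) ↔ q a)) : ComputablePred fun a => p a ∧ q a := by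
  have hmem {T : Set α} (hT : T ⊆ S) : PrimrecRel fun a b => c b ∧ f a b ∈ T :=
    (hc.comp Primrec.snd).and ((primrecPred_mem_of_finite (hS.subset hT)).comp hf)
  -- Both searches look for a `b` reaching the finite set `S`, on which `q` and its negation are
  -- primitive recursive even if `q` is not.
  refine ComputablePred.computable_iff_re_compl_re'.2 ⟨?_, ?_⟩
  · refine (rePred_exists (R := fun a b => p a ∧ c b ∧ f a b ∈ S ∩ {x | q x})
      ((hp.comp Primrec.fst).and (hmem Set.inter_subset_left))).of_eq fun a => ⟨?_, ?_⟩
    · rintro ⟨b, ha, hb, -, hqb⟩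
      exact ⟨ha, (hq a b hb).1 hqb⟩
    · rintro ⟨ha, hqa⟩
      obtain ⟨b, hb, hbS⟩ := hrep a ha
      exact ⟨b, ha, hb, hbS, (hq a b hb).2 hqa⟩
  · refine (rePred_exists (R := fun a b => ¬p a ∨ c b ∧ f a b ∈ S ∩ {x | ¬q x})
      ((hp.comp Primrec.fst).not.or (hmem Set.inter_subset_left))).of_eq fun a => ⟨?_, ?_⟩
    · rintro ⟨b, ha | ⟨hb, -, hqb⟩⟩ ⟨ha', hqa⟩
      · exact ha ha'
      · exact hqb ((hq a b hb).2 hqa)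
    · intro h
      by_cases ha : p a
      · obtain ⟨b, hb, hbS⟩ := hrep a ha
        exact ⟨b, .inr ⟨hb, hbS, fun hqb => h ⟨ha, (hq a b hb).1 hqb⟩⟩⟩
      · exact ⟨Classical.arbitrary β, .inl ha⟩

/-- Matrices are encoded as functions of two indices, so that this instance is definitionally the
one on `Fin m → Fin n → σ`. -/
instance primcodableMatrix {m n : ℕ} : Primcodable (Matrix (Fin m) (Fin n) σ) :=
  inferInstanceAs (Primcodable (Fin m → Fin n → σ))

theorem primrec_matrix_iff {m n : ℕ} {A : α → Matrix (Fin m) (Fin n) σ} :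
    Primrec A ↔ ∀ i j, Primrec fun a => A a i j :=
  ⟨fun hA i j => Primrec.fin_app.comp (Primrec.fin_app.comp hA (Primrec.const i)) (Primrec.const j),
    fun hA => primrec_fin_pi fun i => primrec_fin_pi fun j => hA i j⟩

theorem primrec_matrix_transpose {m n : ℕ} :
    Primrec (transpose : Matrix (Fin m) (Fin n) σ → Matrix (Fin n) (Fin m) σ) :=
  primrec_matrix_iff.2 fun i j => primrec_matrix_iff.1 .id j i

theorem primrec_matrix_mul {l m n : ℕ} :
    Primrec₂ fun (A : Matrix (Fin l) (Fin m) ℤ) (B : Matrix (Fin m) (Fin n) ℤ) => A * B := by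
  refine primrec_matrix_iff.2 fun i j => ?_
  simp only [mul_apply]
  exact primrec_finset_sum primrec_int_add _ fun k => primrec_int_mul.comp
    (primrec_matrix_iff.1 Primrec.fst i k) (primrec_matrix_iff.1 Primrec.snd k j)

theorem primrec_matrix_det {n : ℕ} : Primrec (det : Matrix (Fin n) (Fin n) ℤ → ℤ) := by
  rw [funext det_apply']
  exact primrec_finset_sum primrec_int_add _ fun π => primrec_int_mul.comp (Primrec.const _)
    (primrec_finset_prod primrec_int_mul _ fun i => primrec_matrix_iff.1 .id (π i) i)

theorem primrecPred_matrix_isSymm {n : ℕ} :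
    PrimrecPred (IsSymm : Matrix (Fin n) (Fin n) σ → Prop) :=
  Primrec.eq.comp primrec_matrix_transpose .id

end PrimitiveRecursion

section Decidability

theorem finite_setOf_isUnit_int : {u : ℤ | IsUnit u}.Finite := by
  simpa only [Int.isUnit_iff] using! Set.toFinite {1, -1}

theorem primrec_transpose_mul_mul {m n : ℕ} :
    Primrec₂ fun (V : Matrix (Fin m) (Fin m) ℤ) (P : Matrix (Fin m) (Fin n) ℤ) => Pᵀ * V * P :=
  primrec_matrix_mul.comp
    (primrec_matrix_mul.comp (primrec_matrix_transpose.comp Primrec.snd) Primrec.fst) Primrec.snd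

theorem isIndefinite_and_isCongruent_of_isCongruent {ι : Type*} [Fintype ι] [DecidableEq ι]
    {V V' W W' : Matrix ι ι ℤ} (hVW : IsCongruent V W) (hVW' : IsCongruent V' W')
    (h : IsIndefinite (V.map ((↑) : ℤ → ℝ)) ∧ IsIndefinite (V'.map ((↑) : ℤ → ℝ)) ∧
      IsCongruent V V') :
    IsIndefinite (W.map ((↑) : ℤ → ℝ)) ∧ IsIndefinite (W'.map ((↑) : ℤ → ℝ)) ∧
      IsCongruent W W' :=
  ⟨(hVW.map (Int.castRingHom ℝ)).isIndefinite h.1,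
    (hVW'.map (Int.castRingHom ℝ)).isIndefinite h.2.1, (hVW.symm.trans h.2.2).trans hVW'⟩

theorem computablePred_indefinite_congruent_general (m : ℕ) {s : Set ℤ} (hs : s.Finite)
    (h0 : 0 ∉ s) {r : Matrix (Fin m) (Fin m) ℤ → Matrix (Fin m) (Fin m) ℤ → Prop}
    (hr : ∀ {V V' W W'}, IsCongruent V W → IsCongruent V' W' → r V V' → r W W') :
    ComputablePred fun p : Matrix (Fin m) (Fin m) ℤ × Matrix (Fin m) (Fin m) ℤ =>
      (p.1.IsSymm ∧ p.2.IsSymm ∧ p.1.det ∈ s ∧ p.2.det ∈ s) ∧ r p.1 p.2 := by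
  obtain ⟨D, hD⟩ := (hs.image abs).bddAbove
  obtain ⟨S, hS, hrep⟩ := exists_finite_isCongruent_representatives m D
  have hreduce {V : Matrix (Fin m) (Fin m) ℤ} (hV : V.IsSymm) (hdet : V.det ∈ s) :
      ∃ P : Matrix (Fin m) (Fin m) ℤ, IsUnit P.det ∧ Pᵀ * V * P ∈ S := by
    obtain ⟨_, hW, P, hP, rfl⟩ :=
      hrep V hV (ne_of_mem_of_not_mem hdet h0) (hD (Set.mem_image_of_mem _ hdet))
    exact ⟨P, hP, hW⟩
  have hsymm := primrecPred_matrix_isSymm (σ := ℤ) (n := m)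
  have hdet := (primrecPred_mem_of_finite hs).comp (primrec_matrix_det (n := m))
  have hunit := (primrecPred_mem_of_finite finite_setOf_isUnit_int).comp
    (primrec_matrix_det (n := m))
  refine computablePred_and_of_finite_representatives
    (c := fun P : Matrix (Fin m) (Fin m) ℤ × Matrix (Fin m) (Fin m) ℤ =>
      IsUnit P.1.det ∧ IsUnit P.2.det)
    (f := fun p P => (P.1ᵀ * p.1 * P.1, P.2ᵀ * p.2 * P.2))
    (.and (hsymm.comp .fst) (.and (hsymm.comp .snd) (.and (hdet.comp .fst) (hdet.comp .snd))))
    (.and (hunit.comp .fst) (hunit.comp .snd)) (Primrec.pair ?_ ?_) (hS.prod hS) ?_ ?_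
  · exact primrec_transpose_mul_mul.comp (Primrec.fst.comp .fst) (Primrec.fst.comp .snd)
  · exact primrec_transpose_mul_mul.comp (Primrec.snd.comp .fst) (Primrec.snd.comp .snd)
  · rintro ⟨V, V'⟩ ⟨hV, hV', hVdet, hVdet'⟩
    obtain ⟨P, hP, hPS⟩ := hreduce hV hVdet
    obtain ⟨P', hP', hPS'⟩ := hreduce hV' hVdet'
    exact ⟨(P, P'), ⟨hP, hP'⟩, hPS, hPS'⟩
  · rintro ⟨V, V'⟩ ⟨P, P'⟩ ⟨hP, hP'⟩
    have hV : IsCongruent V (Pᵀ * V * P) := ⟨P, hP, rfl⟩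
    have hV' : IsCongruent V' (P'ᵀ * V' * P') := ⟨P', hP', rfl⟩
    exact ⟨hr hV.symm hV'.symm, hr hV hV'⟩

end Decidability

/-- The predicate "two integer matrices are symmetric, unimodular, indefinite, and
congruent over `ℤ`" is computably decidable. -/
theorem computablePred_indefinite_congruent (m : ℕ) :
    ComputablePred fun p : (Fin m → Fin m → ℤ) × (Fin m → Fin m → ℤ) =>
      (Matrix.of p.1).IsSymm ∧ (Matrix.of p.2).IsSymm ∧
      IsUnit (Matrix.of p.1).det ∧ IsUnit (Matrix.of p.2).det ∧
      (∃ x : Fin m → ℝ, 0 < x ⬝ᵥ ((Matrix.of p.1).map ((↑) : ℤ → ℝ)).mulVec x) ∧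
      (∃ y : Fin m → ℝ, y ⬝ᵥ ((Matrix.of p.1).map ((↑) : ℤ → ℝ)).mulVec y < 0) ∧
      (∃ x : Fin m → ℝ, 0 < x ⬝ᵥ ((Matrix.of p.2).map ((↑) : ℤ → ℝ)).mulVec x) ∧
      (∃ y : Fin m → ℝ, y ⬝ᵥ ((Matrix.of p.2).map ((↑) : ℤ → ℝ)).mulVec y < 0) ∧
      ∃ P : Matrix (Fin m) (Fin m) ℤ, IsUnit P.det ∧
        Matrix.of p.2 = Pᵀ * Matrix.of p.1 * P := by
  exact (computablePred_indefinite_congruent_general m finite_setOf_isUnit_int not_isUnit_zero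
    isIndefinite_and_isCongruent_of_isCongruent).of_eq fun p => by
      simp only [IsIndefinite, IsCongruent, and_assoc, Set.mem_ofPred_eq]
      rfl
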